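/- Let k be a positive integer and let p be a prime with p ≡ 5 (mod 6). Then for all integers n ≥ 0, B̄_{2,9}( 6p^{2k} n + p^{2k} ) ≡ (−p)^k · B̄_{2,9}(6n+1) (mod 8). -/

import Mathlib

/-- `biregOverpartitions l1 l2 n` is the number of `(l1, l2)`-biregular overpartitions of `n`:
overpartitions of `n` (partitions in which the first occurrence of each part size may be
overlined) none of whose parts is divisible by `l1` or by `l2`.  Each partition of `n` with
admissible parts contributes `2 ^ (number of distinct part sizes)` overpartitions,
corresponding to the choice of which part sizes have their first occurrence overlined. -/
def biregOverpartitions (l1 l2 n : ℕ) : ℕ :=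
  ∑ p : Nat.Partition n,
    if ∀ x ∈ p.parts, ¬ l1 ∣ x ∧ ¬ l2 ∣ x then 2 ^ p.parts.toFinset.card else 0

/-!
Overpartitions with parts in `S` are generated by `∏ (1 + 2 * f a)` over `a ∈ S`, where `f a` is the
sum of `X ^ (a * j)` over `j ≥ 1`. Modulo `8` only `1 + 2 * e₁ + 4 * e₂` survives, and
`2 * e₂ = (∑ f a) ^ 2 - ∑ f a ^ 2`, so the count is given by the numbers of divisors in `S`. When
`n ≡ 1` modulo `6` and `S` consists of the integers divisible by neither `2` nor `9`, involutions on
the divisors dispose of the square of the sum and leave twice the divisor sum `σ₁ n`. The theorem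
is then the Hecke relation `σ₁ (p ^ 2 * n) + p * σ₁ n = (1 + p) * σ₁ (p * n)`: both factors on the
right are even, the second because `p * n ≡ 2` modulo `3` is not a square.
-/

open Finset PowerSeries
open scoped ArithmeticFunction.sigma

/-- The series `∑ X ^ (m * j)` over `j ≥ 1`, so that the overpartitions whose only part size is
`m` are generated by `1 + 2 * multiplesSeries R m`. For `m = 0` it is `0`. -/
noncomputable def multiplesSeries (R : Type*) [Semiring R] (m : ℕ) : R⟦X⟧ :=
  PowerSeries.mk fun n => if m ∣ n ∧ n ≠ 0 then 1 else 0

section Semiring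

variable {R : Type*} [Semiring R]

lemma coeff_multiplesSeries (m n : ℕ) :
    coeff n (multiplesSeries R m) = if m ∣ n ∧ n ≠ 0 then 1 else 0 :=
  coeff_mk n _

lemma multiplesSeries_zero : multiplesSeries R 0 = 0 := by
  ext n
  simp [coeff_multiplesSeries]

open scoped PowerSeries.WithPiTopology in
lemma hasSum_multiplesSeries [TopologicalSpace R] {m : ℕ} (hm : m ≠ 0) :
    HasSum (fun j => (X : R⟦X⟧) ^ (m * (j + 1))) (multiplesSeries R m) := by
  rw [WithPiTopology.hasSum_iff_hasSum_coeff]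
  intro n
  simp only [coeff_X_pow, coeff_multiplesSeries]
  by_cases h : m ∣ n ∧ n ≠ 0
  · obtain ⟨⟨j, rfl⟩, hn⟩ := h
    obtain ⟨j, rfl⟩ := Nat.exists_eq_add_one_of_ne_zero (right_ne_zero_of_mul hn)
    convert hasSum_ite_eq j (1 : R) using 2 with i
    · simp [hm, eq_comm]
    · simp [hm]
  · rw [if_neg h]
    convert hasSum_zero using 2 with j
    refine if_neg ?_
    rintro rfl
    exact h ⟨dvd_mul_right _ _, by positivity⟩

end Semiring

section CommSemiring

variable {R : Type*} [CommSemiring R]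

open scoped PowerSeries.WithPiTopology in
lemma genFun_ite_mem_eq_prod (s : Finset ℕ) (w : R) :
    Nat.Partition.genFun (fun a _ => if a ∈ s then w else 0) =
      ∏ a ∈ s, (1 + w • multiplesSeries R a) := by
  let : TopologicalSpace R := ⊥
  have : DiscreteTopology R := ⟨rfl⟩
  let factor : ℕ → R⟦X⟧ := fun a => if a ∈ s then 1 + w • multiplesSeries R a else 1
  have hfactor : HasProd factor (∏ a ∈ s, (1 + w • multiplesSeries R a)) := by
    rw [← prod_congr rfl fun a ha => (if_pos ha : factor a = _)]
    exact hasProd_prod_of_ne_finset_one fun a ha => if_neg ha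
  have hshift : HasProd (fun i => factor (i + 1)) (∏ a ∈ s, (1 + w • multiplesSeries R a)) := by
    refine ((add_left_injective 1).hasProd_iff (f := factor) ?_).2 hfactor
    intro a ha
    obtain rfl : a = 0 := by
      by_contra h
      exact ha ⟨a - 1, Nat.sub_add_cancel (Nat.pos_of_ne_zero h)⟩
    simp [factor, multiplesSeries_zero]
  have hfactor_succ (i : ℕ) :
      1 + ∑' j, (if i + 1 ∈ s then w else 0) • (X : R⟦X⟧) ^ ((i + 1) * (j + 1)) =
        factor (i + 1) := by
    by_cases hi : i + 1 ∈ s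
    · simp only [factor, hi, if_true,
        ((hasSum_multiplesSeries (R := R) i.succ_ne_zero).const_smul w).tsum_eq]
    · simp [factor, hi]
  have hgen := Nat.Partition.hasProd_genFun fun a _ => if a ∈ s then w else 0
  simp only [hfactor_succ] at hgen
  exact hgen.unique hshift

end CommSemiring

section CommRing

variable {R : Type*} [CommRing R]

lemma multiplesSeries_eq_expand {m : ℕ} (hm : m ≠ 0) :
    multiplesSeries R m = expand m hm (X * PowerSeries.mk 1) := by
  ext n
  rw [coeff_multiplesSeries, coeff_expand, ite_and]
  split_ifs with hmn hn
  · obtain ⟨j, hj⟩ :=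
      Nat.exists_eq_add_one_of_ne_zero ((Nat.div_ne_zero_iff_of_dvd hmn).2 ⟨hn, hm⟩)
    simp [hj, coeff_succ_X_mul]
  · simp_all
  · rfl

lemma coeff_X_mul_mk_one_sq (n : ℕ) :
    coeff n ((X * PowerSeries.mk 1 : R⟦X⟧) ^ 2) = ((n - 1 : ℕ) : R) := by
  rw [mul_pow, coeff_X_pow_mul', mk_one_pow_eq_mk_choose_add R 1, coeff_mk, Nat.choose_one_right]
  split_ifs with hn
  · congr 1
    omega
  · rw [show n - 1 = 0 by omega, Nat.cast_zero]

lemma coeff_multiplesSeries_sq (m n : ℕ) :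
    coeff n (multiplesSeries R m ^ 2) = if m ∣ n then ((n / m - 1 : ℕ) : R) else 0 := by
  rcases eq_or_ne m 0 with rfl | hm
  · simp [multiplesSeries_zero]
  · rw [multiplesSeries_eq_expand hm, ← map_pow, coeff_expand, coeff_X_mul_mk_one_sq]

end CommRing

section PowerSums

variable {ι R : Type*} [CommRing R] (s : Finset ι) (f : ι → R)

lemma two_dvd_sum_sq_sub_sum_sq : 2 ∣ (∑ i ∈ s, f i) ^ 2 - ∑ i ∈ s, f i ^ 2 := by
  classical
  induction s using Finset.induction with
  | empty => simp
  | insert i s hi ih =>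
    obtain ⟨e, he⟩ := ih
    rw [sum_insert hi, sum_insert hi]
    exact ⟨f i * ∑ j ∈ s, f j + e, by linear_combination he⟩

/- By Newton's identity `2 * e₂ = p₁ ^ 2 - p₂`, the subtrahend is the truncation
`1 + 2 * e₁ + 4 * e₂` of the expansion of the product in elementary symmetric polynomials. -/
lemma eight_dvd_prod_one_add_two_mul_sub :
    8 ∣ ∏ i ∈ s, (1 + 2 * f i) -
      (1 + 2 * ∑ i ∈ s, f i + 2 * ((∑ i ∈ s, f i) ^ 2 - ∑ i ∈ s, f i ^ 2)) := by
  classical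
  induction s using Finset.induction with
  | empty => simp
  | insert i s hi ih =>
    obtain ⟨c, hc⟩ := ih
    obtain ⟨e, he⟩ := two_dvd_sum_sq_sub_sum_sq s f
    rw [prod_insert hi, sum_insert hi, sum_insert hi]
    exact ⟨(1 + 2 * f i) * c + f i * e, by
      linear_combination (1 + 2 * f i) * hc + 4 * f i * he⟩

end PowerSums

section Overpartitions

/-- The number of overpartitions of `n` all of whose parts satisfy `S`: a partition with `r`
distinct part sizes underlies `2 ^ r` overpartitions. -/
def overpartitionCount (S : ℕ → Prop) [DecidablePred S] (n : ℕ) : ℕ :=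
  ∑ P ∈ Nat.Partition.restricted n S, 2 ^ #P.parts.toFinset

/-- The divisors of `n` satisfying `S`, i.e. the part sizes of the partitions of `n` into equal
parts satisfying `S`. Empty for `n = 0`. -/
def divisorsWith (S : ℕ → Prop) [DecidablePred S] (n : ℕ) : Finset ℕ :=
  {a ∈ n.divisors | S a}

variable (S : ℕ → Prop) [DecidablePred S]

/- Parts of a partition of `n` are at most `n`, so cutting the product off there is harmless. -/
lemma overpartitionCount_eq_coeff_prod (n : ℕ) :
    (overpartitionCount S n : ℤ) =
      coeff n (∏ a ∈ Icc 1 n with S a, (1 + 2 * multiplesSeries ℤ a)) := by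
  have hmem (P : n.Partition) :
      (∀ a ∈ P.parts.toFinset, a ∈ {a ∈ Icc 1 n | S a}) ↔ ∀ a ∈ P.parts, S a := by
    simp only [Multiset.mem_toFinset, mem_filter, mem_Icc]
    exact forall₂_congr fun a ha =>
      and_iff_right ⟨P.parts_pos ha, P.parts_sum ▸ Multiset.le_sum_of_mem ha⟩
  have hgen := genFun_ite_mem_eq_prod {a ∈ Icc 1 n | S a} (2 : ℤ)
  simp only [smul_eq_C_mul, map_ofNat] at hgen
  rw [← hgen, Nat.Partition.coeff_genFun, overpartitionCount, Nat.Partition.restricted, sum_filter]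
  push_cast
  refine sum_congr rfl fun P _ => ?_
  simp only [Finsupp.prod, Multiset.toFinsupp_support, prod_ite_zero, prod_const, hmem]

variable {S} in
lemma filter_Icc_dvd_eq_divisorsWith {n k : ℕ} (hkn : k ≤ n) :
    {a ∈ {a ∈ Icc 1 n | S a} | a ∣ k ∧ k ≠ 0} = divisorsWith S k := by
  ext a
  simp only [divisorsWith, mem_filter, mem_Icc, Nat.mem_divisors]
  refine ⟨by tauto, fun ⟨⟨hak, hk⟩, ha⟩ => ⟨⟨⟨?_, ?_⟩, ha⟩, hak, hk⟩⟩
  · exact Nat.pos_of_dvd_of_pos hak (Nat.pos_of_ne_zero hk)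
  · exact (Nat.le_of_dvd (Nat.pos_of_ne_zero hk) hak).trans hkn

lemma coeff_sum_multiplesSeries {n k : ℕ} (hkn : k ≤ n) :
    coeff k (∑ a ∈ Icc 1 n with S a, multiplesSeries ℤ a) = #(divisorsWith S k) := by
  simp only [map_sum, coeff_multiplesSeries, sum_boole, filter_Icc_dvd_eq_divisorsWith hkn]

lemma coeff_sq_sum_multiplesSeries (n : ℕ) :
    coeff n ((∑ a ∈ Icc 1 n with S a, multiplesSeries ℤ a) ^ 2) =
      ∑ ij ∈ antidiagonal n, (#(divisorsWith S ij.1) * #(divisorsWith S ij.2) : ℤ) := by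
  rw [sq, coeff_mul]
  refine sum_congr rfl fun ij hij => ?_
  rw [coeff_sum_multiplesSeries S (HasAntidiagonal.antidiagonal.fst_le hij),
    coeff_sum_multiplesSeries S (HasAntidiagonal.antidiagonal.snd_le hij)]

lemma coeff_sum_multiplesSeries_sq {n : ℕ} (hn : n ≠ 0) :
    coeff n (∑ a ∈ Icc 1 n with S a, multiplesSeries ℤ a ^ 2) =
      ∑ a ∈ divisorsWith S n, ((n / a - 1 : ℕ) : ℤ) := by
  simp only [map_sum, coeff_multiplesSeries_sq]
  rw [← sum_filter, ← filter_Icc_dvd_eq_divisorsWith le_rfl]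
  simp only [hn, ne_eq, not_false_eq_true, and_true]

theorem overpartitionCount_modEq {n : ℕ} (hn : n ≠ 0) :
    (overpartitionCount S n : ℤ) ≡ 2 * #(divisorsWith S n) +
      2 * (∑ ij ∈ antidiagonal n, (#(divisorsWith S ij.1) * #(divisorsWith S ij.2) : ℤ) -
        ∑ a ∈ divisorsWith S n, ((n / a - 1 : ℕ) : ℤ)) [ZMOD 8] := by
  obtain ⟨F, hF⟩ := eight_dvd_prod_one_add_two_mul_sub {a ∈ Icc 1 n | S a} (multiplesSeries ℤ)
  have hcoeff := congrArg (coeff n) hF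
  simp only [← map_ofNat C 8, ← map_ofNat C 2, map_sub, map_add, coeff_C_mul, coeff_one, if_neg hn,
    zero_add] at hcoeff
  rw [map_ofNat, ← overpartitionCount_eq_coeff_prod, coeff_sum_multiplesSeries S le_rfl,
    coeff_sq_sum_multiplesSeries, coeff_sum_multiplesSeries_sq S hn] at hcoeff
  exact Int.modEq_iff_dvd.2 ⟨-coeff n F, by linear_combination -hcoeff⟩

end Overpartitions

section DivisorParity

lemma even_card_of_involution {α : Type*} {s : Finset α} (g : α → α) (hmem : ∀ a ∈ s, g a ∈ s)
    (hne : ∀ a ∈ s, g a ≠ a) (hinv : ∀ a ∈ s, g (g a) = a) : Even #s := by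
  have h : ∑ _a ∈ s, (1 : ZMod 2) = 0 :=
    sum_involution (fun a _ => g a) (fun _ _ => by decide) (fun a ha _ => hne a ha) hmem hinv
  rwa [sum_const, nsmul_one, ZMod.natCast_eq_zero_iff_even] at h

lemma even_card_divisors_of_not_isSquare {n : ℕ} (hn : ¬ IsSquare n) : Even #n.divisors := by
  have hn0 : n ≠ 0 := by
    rintro rfl
    exact hn IsSquare.zero
  refine even_card_of_involution (fun a => n / a) ?_ ?_ ?_
  · exact fun a ha => Nat.mem_divisors.2 ⟨Nat.div_dvd_of_dvd (Nat.dvd_of_mem_divisors ha), hn0⟩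
  · refine fun a ha h => hn ⟨a, ?_⟩
    exact (Nat.div_eq_iff_eq_mul_left (Nat.pos_of_mem_divisors ha)
      (Nat.dvd_of_mem_divisors ha)).1 h
  · exact fun a ha => Nat.div_div_self (Nat.dvd_of_mem_divisors ha) hn0

lemma not_isSquare_of_mod_three_eq_two {n : ℕ} (hn : n % 3 = 2) : ¬ IsSquare n := by
  rintro ⟨a, rfl⟩
  have ha : a % 3 < 3 := Nat.mod_lt a three_pos
  rw [Nat.mul_mod] at hn
  interval_cases a % 3 <;> omega

lemma sigma_modEq_card_divisors_of_odd (k : ℕ) {n : ℕ} (hn : Odd n) :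
    σ k n ≡ #n.divisors [MOD 2] := by
  rw [ArithmeticFunction.sigma_apply, card_eq_sum_ones]
  refine Nat.ModEq.sum fun a ha => ?_
  exact Nat.odd_iff.1 (hn.of_dvd_nat (Nat.dvd_of_mem_divisors ha)).pow

lemma sum_div_sub_one_add_card_divisors (n : ℕ) :
    ∑ a ∈ n.divisors, (n / a - 1) + #n.divisors = σ 1 n := by
  rw [card_eq_sum_ones, ← sum_add_distrib, ArithmeticFunction.sigma_eq_sum_div]
  refine sum_congr rfl fun a ha => ?_
  rw [pow_one, Nat.sub_add_cancel]
  exact Nat.div_pos (Nat.divisor_le ha) (Nat.pos_of_mem_divisors ha)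

lemma sum_antidiagonal_mul_of_odd {R : Type*} [CommSemiring R] (f : ℕ → R) {n : ℕ} (hn : Odd n) :
    ∑ ij ∈ antidiagonal n, f ij.1 * f ij.2 =
      2 * ∑ ij ∈ antidiagonal n with ij.1 < ij.2, f ij.1 * f ij.2 := by
  rw [two_mul, ← sum_filter_add_sum_filter_not (antidiagonal n) (fun ij => ij.1 < ij.2)]
  congr 1
  refine sum_nbij' Prod.swap Prod.swap ?_ ?_ (by simp) (by simp) fun _ _ => mul_comm _ _
  all_goals
    simp only [mem_filter, HasAntidiagonal.mem_antidiagonal, Prod.fst_swap, Prod.snd_swap]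
    grind

end DivisorParity

section Biregular

/-- `a` is admissible as a part of an `(l₁, l₂)`-biregular overpartition. -/
abbrev IsBiregular (l₁ l₂ a : ℕ) : Prop := ¬ l₁ ∣ a ∧ ¬ l₂ ∣ a

lemma biregOverpartitions_eq_overpartitionCount (l₁ l₂ n : ℕ) :
    biregOverpartitions l₁ l₂ n = overpartitionCount (IsBiregular l₁ l₂) n := by
  rw [overpartitionCount, Nat.Partition.restricted, sum_filter, biregOverpartitions]

lemma divisorsWith_isBiregular_eq_divisors {l₁ l₂ n : ℕ} (h₁ : ¬ l₁ ∣ n) (h₂ : ¬ l₂ ∣ n) :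
    divisorsWith (IsBiregular l₁ l₂) n = n.divisors := by
  refine filter_true_of_mem fun a ha => ?_
  have han := Nat.dvd_of_mem_divisors ha
  exact ⟨fun h => h₁ (h.trans han), fun h => h₂ (h.trans han)⟩

lemma even_card_divisorsWith_isBiregular_sq {q l n : ℕ} (hq : q.Prime) (hl : l.Coprime q)
    (hn : q ∣ n) : Even #(divisorsWith (IsBiregular l (q ^ 2)) n) := by
  refine even_card_of_involution (fun a => if q ∣ a then a / q else q * a) ?_ ?_ ?_
  all_goals
    intro a ha
    simp only [divisorsWith, mem_filter, Nat.mem_divisors] at ha ⊢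
    obtain ⟨⟨han, hn0⟩, hla, hqa⟩ := ha
    by_cases hdvd : q ∣ a
  · obtain ⟨b, rfl⟩ := hdvd
    rw [if_pos (dvd_mul_right q b), Nat.mul_div_cancel_left b hq.pos]
    exact ⟨⟨(dvd_mul_left b q).trans han, hn0⟩, fun h => hla (h.mul_left q),
      fun h => hqa (h.mul_left q)⟩
  · rw [if_neg hdvd]
    refine ⟨⟨((hq.coprime_iff_not_dvd).2 hdvd).mul_dvd_of_dvd_of_dvd hn han, hn0⟩,
      fun h => hla (hl.dvd_of_dvd_mul_left h), fun h => hdvd ?_⟩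
    rwa [sq, Nat.mul_dvd_mul_iff_left hq.pos] at h
  · rw [if_pos hdvd]
    exact (Nat.div_lt_self (Nat.pos_of_dvd_of_pos han (Nat.pos_of_ne_zero hn0)) hq.one_lt).ne
  · rw [if_neg hdvd]
    intro h
    exact hdvd ⟨a, h.symm⟩
  · obtain ⟨b, rfl⟩ := hdvd
    have hqb : ¬ q ∣ b := fun h => hqa (by rw [sq]; exact mul_dvd_mul_left q h)
    rw [if_pos (dvd_mul_right q b), Nat.mul_div_cancel_left b hq.pos, if_neg hqb]
  · rw [if_neg hdvd, if_pos (dvd_mul_right q a), Nat.mul_div_cancel_left a hq.pos]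

end Biregular

theorem sigma_sq_mul_add_pow_mul_sigma (k : ℕ) {p : ℕ} (hp : p.Prime) (n : ℕ) :
    σ k (p ^ 2 * n) + p ^ k * σ k n = (1 + p ^ k) * σ k (p * n) := by
  rcases eq_or_ne n 0 with rfl | hn
  · simp
  obtain ⟨e, m, hpm, rfl⟩ := Nat.exists_eq_pow_mul_and_not_dvd hn p hp.ne_one
  have hmul (r : ℕ) : σ k (p ^ r * m) = σ k (p ^ r) * σ k m :=
    ArithmeticFunction.isMultiplicative_sigma.map_mul_of_coprime
      (((hp.coprime_iff_not_dvd).2 hpm).pow_left r)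
  have hsucc (r : ℕ) : σ k (p ^ (r + 1)) = p ^ k * σ k (p ^ r) + 1 := by
    rw [ArithmeticFunction.sigma_apply_prime_pow hp, ArithmeticFunction.sigma_apply_prime_pow hp,
      sum_range_succ', mul_sum]
    simp only [mul_add, mul_one, mul_zero, pow_add, pow_zero, mul_comm]
  rw [← mul_assoc, ← mul_assoc, ← pow_add, ← pow_succ', add_comm 2, hmul, hmul, hmul,
    show e + 2 = e + 1 + 1 from rfl, hsucc (e + 1), hsucc e]
  ring

lemma even_card_divisorsWith_mul_card_divisorsWith {i j : ℕ} (h : (i + j) % 6 = 1) :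
    Even (#(divisorsWith (IsBiregular 2 9) i) * #(divisorsWith (IsBiregular 2 9) j)) := by
  have heven_of_three_dvd {m : ℕ} (hm : 3 ∣ m) : Even #(divisorsWith (IsBiregular 2 9) m) :=
    even_card_divisorsWith_isBiregular_sq Nat.prime_three (by norm_num) hm
  have heven_of_odd {m : ℕ} (hm2 : ¬ 2 ∣ m) (hm3 : m % 3 = 2) :
      Even #(divisorsWith (IsBiregular 2 9) m) := by
    rw [divisorsWith_isBiregular_eq_divisors hm2 (by omega)]
    exact even_card_divisors_of_not_isSquare (not_isSquare_of_mod_three_eq_two hm3)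
  rw [Nat.even_mul]
  by_cases hi : 3 ∣ i
  · exact .inl (heven_of_three_dvd hi)
  by_cases hj : 3 ∣ j
  · exact .inr (heven_of_three_dvd hj)
  rcases Nat.even_or_odd i with hi2 | hi2
  · exact .inr (heven_of_odd (by grind) (by omega))
  · exact .inl (heven_of_odd (by grind) (by omega))

lemma four_dvd_sum_card_divisorsWith_mul {n : ℕ} (hn : n % 6 = 1) :
    (4 : ℤ) ∣ ∑ ij ∈ antidiagonal n, (#(divisorsWith (IsBiregular 2 9) ij.1) *
      #(divisorsWith (IsBiregular 2 9) ij.2) : ℤ) := by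
  rw [sum_antidiagonal_mul_of_odd (fun i => (#(divisorsWith (IsBiregular 2 9) i) : ℤ))
    (Nat.odd_iff.2 (by omega))]
  rw [show (4 : ℤ) = 2 * 2 from rfl]
  refine mul_dvd_mul_left 2 (dvd_sum fun ij hij => ?_)
  rw [mem_filter, HasAntidiagonal.mem_antidiagonal] at hij
  exact_mod_cast (even_card_divisorsWith_mul_card_divisorsWith (hij.1 ▸ hn)).two_dvd

theorem biregOverpartitions_two_nine_modEq {n : ℕ} (hn : n % 6 = 1) :
    (biregOverpartitions 2 9 n : ℤ) ≡ 2 * σ 1 n [ZMOD 8] := by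
  have hmod := overpartitionCount_modEq (IsBiregular 2 9) (n := n) (by omega)
  rw [divisorsWith_isBiregular_eq_divisors (by omega) (by omega),
    ← biregOverpartitions_eq_overpartitionCount] at hmod
  refine hmod.trans ?_
  obtain ⟨c, hc⟩ := four_dvd_sum_card_divisorsWith_mul hn
  have hσ : (∑ a ∈ n.divisors, ((n / a - 1 : ℕ) : ℤ)) + #n.divisors = σ 1 n := by
    exact_mod_cast sum_div_sub_one_add_card_divisors n
  obtain ⟨d, hd⟩ := (Int.natCast_modEq_iff.2
    (sigma_modEq_card_divisors_of_odd 1 (Nat.odd_iff.2 (by omega) : Odd n))).dvd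
  rw [hc]
  refine (Int.modEq_iff_dvd.2 ⟨-c - d, ?_⟩)
  push_cast at hd
  linear_combination 2 * hσ - 4 * hd

theorem sigma_one_sq_mul_modEq {p n : ℕ} (hp : p.Prime) (hodd : Odd (p * n))
    (hsq : ¬ IsSquare (p * n)) : (σ 1 (p ^ 2 * n) : ℤ) ≡ -p * σ 1 n [ZMOD 4] := by
  have heven : 2 ∣ σ 1 (p * n) :=
    ((sigma_modEq_card_divisors_of_odd 1 hodd).dvd_iff dvd_rfl).2
      (even_card_divisors_of_not_isSquare hsq).two_dvd
  have hp2 : 2 ∣ 1 + p := ((Nat.odd_mul.1 hodd).1.one_add).two_dvd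
  have hhecke := sigma_sq_mul_add_pow_mul_sigma 1 hp n
  rw [pow_one] at hhecke
  obtain ⟨c, hc⟩ := hhecke ▸ mul_dvd_mul hp2 heven
  refine (Int.modEq_iff_dvd.2 ⟨-c, ?_⟩)
  zify at hc
  linear_combination -hc

lemma sq_mul_mod_six {p n : ℕ} (hp : p % 6 = 5) (hn : n % 6 = 1) : (p ^ 2 * n) % 6 = 1 := by
  simp [Nat.mul_mod, Nat.pow_mod, hp, hn]

theorem biregOverpartitions_two_nine_sq_mul_modEq {p n : ℕ} (hp : p.Prime) (hp5 : p % 6 = 5)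
    (hn : n % 6 = 1) :
    (biregOverpartitions 2 9 (p ^ 2 * n) : ℤ) ≡ -p * biregOverpartitions 2 9 n [ZMOD 8] := by
  have hpn : (p * n) % 6 = 5 := by simp [Nat.mul_mod, hp5, hn]
  have hσ := sigma_one_sq_mul_modEq hp (Nat.odd_iff.2 (by omega))
    (not_isSquare_of_mod_three_eq_two (n := p * n) (by omega))
  calc (biregOverpartitions 2 9 (p ^ 2 * n) : ℤ)
      ≡ 2 * σ 1 (p ^ 2 * n) [ZMOD 8] :=
        biregOverpartitions_two_nine_modEq (sq_mul_mod_six hp5 hn)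
    _ ≡ 2 * (-p * σ 1 n) [ZMOD 8] := hσ.mul_left' (c := 2)
    _ = -p * (2 * σ 1 n) := mul_left_comm _ _ _
    _ ≡ -p * biregOverpartitions 2 9 n [ZMOD 8] :=
        ((biregOverpartitions_two_nine_modEq hn).symm.mul_left _)

theorem biregOverpartitions_two_nine_pow_mul_modEq {p n : ℕ} (hp : p.Prime) (hp5 : p % 6 = 5)
    (hn : n % 6 = 1) (k : ℕ) :
    (biregOverpartitions 2 9 (p ^ (2 * k) * n) : ℤ) ≡
      (-(p : ℤ)) ^ k * biregOverpartitions 2 9 n [ZMOD 8] := by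
  induction k generalizing n with
  | zero => simp
  | succ k ih =>
    rw [mul_add_one, pow_add, mul_assoc, pow_succ (-(p : ℤ)) k, mul_assoc (_ ^ k)]
    exact (ih (sq_mul_mod_six hp5 hn)).trans
      ((biregOverpartitions_two_nine_sq_mul_modEq hp hp5 hn).mul_left _)

theorem B29_mult_iter_mod8 (k : ℕ) (hk : 0 < k) (p : ℕ) (hp : p.Prime) (hp5 : p % 6 = 5)
    (n : ℕ) :
    (biregOverpartitions 2 9 (6 * p ^ (2 * k) * n + p ^ (2 * k)) : ℤ) ≡
      (-(p : ℤ)) ^ k * biregOverpartitions 2 9 (6 * n + 1) [ZMOD 8] := by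
  rw [show 6 * p ^ (2 * k) * n + p ^ (2 * k) = p ^ (2 * k) * (6 * n + 1) by ring]
  exact biregOverpartitions_two_nine_pow_mul_modEq hp hp5 (by omega) k
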